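/- Let 0 < α ≤ 1, let h > 0, let N ≥ 2 be an integer, let x_j = a + jh (j = 0,…,N), and let p, q, r be real-valued mesh functions with p(x_i) > 0 and r(x_i) > 0 for all i. Suppose y satisfies ₖΔ^α_N(p(x_k)·₀Δ^α_k y(x_k)) + q(x_k) y(x_k) − λ r(x_k) y(x_k) = 0 for k = 1,…,N−1, together with y(x_0) = y(x_N) = 0 and the isoperimetric constraint I[y] = Σ_{k=1}^{N} r(x_k) (y(x_k))² = 1. Then J[y] = Σ_{k=1}^{N} [ p(x_k)(₀Δ^α_k y(x_k))² + q(x_k)(y(x_k))² ] = λ. -/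

import Mathlib

/-!
Multiply the equation at `x_k` by `y(x_k)` and sum over `k = 1, …, N`; at `k = N`, where the
equation is not assumed, the product vanishes anyway because `y(x_N) = 0`. Fractional summation
by parts (`sum_mul_glBackDiff`) moves the forward difference onto `y`, which gives
`J[y] = λ I[y] = λ`. The sums in that identity start at `k = 0`, but both `k = 0` terms vanish
since `y(x_0) = 0`.
-/

/-- The Grünwald–Letnikov coefficients `a_i^{(α)} = (-1)^i α(α-1)⋯(α-i+1)/i!`
(with `a_0^{(α)} = 1`). -/
noncomputable def acoef (α : ℝ) (i : ℕ) : ℝ :=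
  (-1 : ℝ) ^ i * (∏ j ∈ Finset.range i, (α - (j : ℝ))) / (Nat.factorial i)

/-- The backward fractional difference of order `α` on a uniform mesh with step `h`,
of a mesh function `f` (where `f k` stands for `f(x_k)`, `x_k = a + k h`):
`₀Δ^α_k f(x_k) = h^{-α} Σ_{i=0}^{k} a_i^{(α)} f(x_{k-i})`. -/
noncomputable def glBackDiff (α h : ℝ) (f : ℕ → ℝ) (k : ℕ) : ℝ :=
  h ^ (-α) * ∑ i ∈ Finset.range (k + 1), acoef α i * f (k - i)

/-- The forward fractional difference of order `α` on a uniform mesh with step `h`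
and `N + 1` mesh points: `ₖΔ^α_N f(x_k) = h^{-α} Σ_{i=0}^{N-k} a_i^{(α)} f(x_{k+i})`. -/
noncomputable def glFwdDiff (α h : ℝ) (N : ℕ) (f : ℕ → ℝ) (k : ℕ) : ℝ :=
  h ^ (-α) * ∑ i ∈ Finset.range (N - k + 1), acoef α i * f (k + i)

/-- `y` satisfies the discrete fractional Sturm–Liouville equation
`ₖΔ^α_N (p(x_k) ₀Δ^α_k y(x_k)) + q(x_k) y(x_k) = λ r(x_k) y(x_k)` for `k = 1, …, N-1`. -/
def SLSolves (α h : ℝ) (N : ℕ) (p q r : ℕ → ℝ) (lam : ℝ) (y : ℕ → ℝ) : Prop :=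
  ∀ k, 1 ≤ k → k ≤ N - 1 →
    glFwdDiff α h N (fun j => p j * glBackDiff α h y j) k + q k * y k = lam * (r k * y k)

/-- `(lam, y)` is an eigenpair of the discrete fractional Sturm–Liouville problem:
`y` is a nontrivial mesh function satisfying the equation together with the
boundary conditions `y(x_0) = y(x_N) = 0`. -/
def IsSLEigenpair (α h : ℝ) (N : ℕ) (p q r : ℕ → ℝ) (lam : ℝ) (y : ℕ → ℝ) : Prop :=
  y 0 = 0 ∧ y N = 0 ∧ (∃ k ≤ N, y k ≠ 0) ∧ SLSolves α h N p q r lam y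

/-- The functional `J[y] = Σ_{k=1}^{N} [p(x_k) (₀Δ^α_k y(x_k))² + q(x_k) y(x_k)²]`. -/
noncomputable def slJ (α h : ℝ) (N : ℕ) (p q : ℕ → ℝ) (y : ℕ → ℝ) : ℝ :=
  ∑ k ∈ Finset.Icc 1 N, (p k * (glBackDiff α h y k) ^ 2 + q k * (y k) ^ 2)

/-- The functional `I[y] = Σ_{k=1}^{N} r(x_k) y(x_k)²`. -/
noncomputable def slI (N : ℕ) (r : ℕ → ℝ) (y : ℕ → ℝ) : ℝ :=
  ∑ k ∈ Finset.Icc 1 N, r k * (y k) ^ 2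

/-- Fractional summation by parts: with respect to the pairing `∑_{k=0}^{N} f(x_k) g(x_k)`,
the forward difference is the transpose of the backward difference. No boundary terms appear
because both ends of the mesh are included. -/
theorem sum_mul_glBackDiff (α h : ℝ) (N : ℕ) (f y : ℕ → ℝ) :
    ∑ k ∈ Finset.range (N + 1), f k * glBackDiff α h y k =
      ∑ k ∈ Finset.range (N + 1), glFwdDiff α h N f k * y k := by
  -- Both differences as rows and columns of the triangular Toeplitz matrix `a_{k-j}`, `j ≤ k`.
  have hback : ∀ k, glBackDiff α h y k =
      h ^ (-α) * ∑ j ∈ Finset.range (k + 1), acoef α (k - j) * y j := by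
    intro k
    unfold glBackDiff
    rw [← Finset.sum_flip]
    congr 1
    refine Finset.sum_congr rfl fun j hj => ?_
    have hjk : j ≤ k := Nat.lt_succ_iff.mp (Finset.mem_range.mp hj)
    rw [Nat.sub_sub_self hjk]
  have hfwd : ∀ j ∈ Finset.range (N + 1), glFwdDiff α h N f j =
      h ^ (-α) * ∑ k ∈ Finset.Ico j (N + 1), acoef α (k - j) * f k := by
    intro j hj
    have hjN : j ≤ N := Nat.lt_succ_iff.mp (Finset.mem_range.mp hj)
    unfold glFwdDiff
    rw [Finset.sum_Ico_eq_sum_range, Nat.sub_add_comm hjN]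
    simp
  have hleft : ∑ k ∈ Finset.range (N + 1), f k * glBackDiff α h y k =
      ∑ k ∈ Finset.range (N + 1), ∑ j ∈ Finset.range (k + 1),
        h ^ (-α) * acoef α (k - j) * f k * y j := by
    refine Finset.sum_congr rfl fun k _ => ?_
    rw [hback, Finset.mul_sum, Finset.mul_sum]
    exact Finset.sum_congr rfl fun j _ => by ring
  have hright : ∑ j ∈ Finset.range (N + 1), glFwdDiff α h N f j * y j =
      ∑ j ∈ Finset.range (N + 1), ∑ k ∈ Finset.Ico j (N + 1),
        h ^ (-α) * acoef α (k - j) * f k * y j := by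
    refine Finset.sum_congr rfl fun j hj => ?_
    rw [hfwd j hj, Finset.mul_sum, Finset.sum_mul]
    exact Finset.sum_congr rfl fun k _ => by ring
  rw [hleft, hright]
  refine Finset.sum_comm' fun k j => ?_
  simp only [Finset.mem_range, Finset.mem_Ico]
  omega

theorem sum_range_eq_sum_Icc_one (N : ℕ) (g : ℕ → ℝ) (hg : g 0 = 0) :
    ∑ k ∈ Finset.range (N + 1), g k = ∑ k ∈ Finset.Icc 1 N, g k := by
  symm
  refine Finset.sum_subset (fun k hk => ?_) fun k hk hk' => ?_
  · simp only [Finset.mem_Icc, Finset.mem_range] at *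
    omega
  · have hk0 : k = 0 := by
      simp only [Finset.mem_Icc, Finset.mem_range] at *
      omega
    rw [hk0, hg]

/-- if `y` satisfies the discrete fractional Sturm–Liouville equation
with parameter `λ`, the boundary conditions `y(x_0) = y(x_N) = 0`, and the
isoperimetric constraint `I[y] = 1`, then `J[y] = λ`. -/
theorem discrete_SL_J_eq_lambda (a : ℝ) (α h : ℝ) (hα0 : 0 < α) (hα1 : α ≤ 1)
    (hh : 0 < h) (N : ℕ) (hN : 2 ≤ N) (p q r : ℕ → ℝ)
    (hp : ∀ i ≤ N, 0 < p i) (hr : ∀ i ≤ N, 0 < r i)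
    (lam : ℝ) (y : ℕ → ℝ)
    (heq : ∀ k, 1 ≤ k → k ≤ N - 1 →
      glFwdDiff α h N (fun j => p j * glBackDiff α h y j) k + q k * y k
        - lam * (r k * y k) = 0)
    (hy0 : y 0 = 0) (hyN : y N = 0)
    (hI : slI N r y = 1) :
    slJ α h N p q y = lam := by
  have hback0 : glBackDiff α h y 0 = 0 := by simp [glBackDiff, hy0]
  have hparts := sum_mul_glBackDiff α h N (fun j => p j * glBackDiff α h y j) y
  rw [sum_range_eq_sum_Icc_one N _ (by simp [hback0]),
    sum_range_eq_sum_Icc_one N _ (by simp [hy0])] at hparts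
  have hterm : ∀ k ∈ Finset.Icc 1 N,
      glFwdDiff α h N (fun j => p j * glBackDiff α h y j) k * y k + q k * y k ^ 2 =
        lam * (r k * y k ^ 2) := by
    intro k hk
    obtain ⟨hk1, hkN⟩ := Finset.mem_Icc.mp hk
    rcases eq_or_lt_of_le hkN with rfl | hlt
    · simp [hyN]
    · linear_combination y k * heq k hk1 (by omega)
  calc slJ α h N p q y
      = ∑ k ∈ Finset.Icc 1 N, p k * glBackDiff α h y k * glBackDiff α h y k +
          ∑ k ∈ Finset.Icc 1 N, q k * y k ^ 2 := by
        rw [slJ, ← Finset.sum_add_distrib]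
        exact Finset.sum_congr rfl fun k _ => by ring
    _ = ∑ k ∈ Finset.Icc 1 N, lam * (r k * y k ^ 2) := by
        rw [hparts, ← Finset.sum_add_distrib]
        exact Finset.sum_congr rfl hterm
    _ = lam * slI N r y := by rw [slI, Finset.mul_sum]
    _ = lam := by rw [hI, mul_one]
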